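/- Let A = (Q, Σ, δ) be a DFA, S ⊆ Q, n > 0, and let M be the DVCA constructed from A, S, and n as described in the context. Then the following are equivalent: (i) M has an n-turn synchronizing word in the same stack model; (ii) M has an n-turn synchronizing word in the arbitrary stack model; (iii) there exists a word w ∈ Σ* with δ(Q, w) ⊆ S. -/

import Mathlib

/-- Letters of a visibly pushdown alphabet: call letters (pushing one stack symbol),
internal letters (leaving the stack unchanged), and return letters (popping). -/
inductive VLetter (C I R : Type) : Type
  | call : C → VLetter C I R
  | int  : I → VLetter C I R
  | ret  : R → VLetter C I R

/-- A deterministic visibly push-down automaton over state type `Q`, call letters `C`,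
internal letters `I`, return letters `R`, and stack alphabet `Γ` (the symbols other than the
bottom symbol `⊥`).  A stack is a `List Γ` of the symbols above `⊥`, top at the head; the
bottom symbol `⊥` is implicit.  A return transition receives `none` when `⊥` is the topmost
symbol (it is read but not popped), and `some γ` when `γ ∈ Γ` is on top (which is popped). -/
structure DVPDA (Q C I R Γ : Type) : Type where
  δc : Q → C → Q × Γ
  δi : Q → I → Q
  δr : Q → R → Option Γ → Q

namespace DVPDA

variable {Q C I R Γ : Type}

/-- One step of a DVPDA on a configuration `(q, υ)`. -/
def step (M : DVPDA Q C I R Γ) : Q × List Γ → VLetter C I R → Q × List Γ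
  | (q, s), .call c => ((M.δc q c).1, (M.δc q c).2 :: s)
  | (q, s), .int i  => (M.δi q i, s)
  | (q, []), .ret ρ => (M.δr q ρ none, [])
  | (q, γ :: s), .ret ρ => (M.δr q ρ (some γ), s)

/-- The run of a DVPDA on a word: `(q, υ) →^w M.run (q, υ) w`. -/
def run (M : DVPDA Q C I R Γ) (cfg : Q × List Γ) (w : List (VLetter C I R)) : Q × List Γ :=
  w.foldl M.step cfg

/-- `w` synchronizes `M` in the empty stack model: all runs from `(q, ⊥)` end in the same
state with empty stack. -/
def SyncEmpty (M : DVPDA Q C I R Γ) (w : List (VLetter C I R)) : Prop :=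
  ∃ qbar : Q, ∀ q : Q, M.run (q, []) w = (qbar, [])

/-- `w` synchronizes `M` in the same stack model: all runs from `(q, ⊥)` end in the same
state with the same stack content. -/
def SyncSame (M : DVPDA Q C I R Γ) (w : List (VLetter C I R)) : Prop :=
  ∃ (qbar : Q) (υ : List Γ), ∀ q : Q, M.run (q, []) w = (qbar, υ)

/-- `w` synchronizes `M` in the arbitrary stack model: all runs from `(q, ⊥)` end in the same
state, with arbitrary stack contents. -/
def SyncArb (M : DVPDA Q C I R Γ) (w : List (VLetter C I R)) : Prop :=
  ∃ qbar : Q, ∀ q : Q, (M.run (q, []) w).1 = qbar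

end DVPDA

/-- `AtMostStrokes h len m`: the height sequence `h 0, h 1, …, h len` can be split into at
most `m` strokes, i.e. there are breakpoints `0 = i₀ ≤ i₁ ≤ ⋯ ≤ i_m = len` such that on each
segment the heights are monotone non-decreasing (an upstroke) or monotone non-increasing
(a downstroke). -/
def AtMostStrokes (h : ℕ → ℕ) (len m : ℕ) : Prop :=
  ∃ br : Fin (m+1) → ℕ, br 0 = 0 ∧ br (Fin.last m) = len ∧ Monotone br ∧
    ∀ j : Fin m,
      (∀ a b : ℕ, br j.castSucc ≤ a → a ≤ b → b ≤ br j.succ → h a ≤ h b) ∨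
      (∀ a b : ℕ, br j.castSucc ≤ a → a ≤ b → b ≤ br j.succ → h b ≤ h a)

/-- Every run of `M` on `w` (started with empty stack) consists of at most `n+1` strokes,
i.e. it makes at most `n` turns. -/
def DVPDA.NTurnRun {Q C I R Γ : Type} (M : DVPDA Q C I R Γ) (n : ℕ)
    (w : List (VLetter C I R)) : Prop :=
  ∀ q : Q, AtMostStrokes (fun k => ((M.run (q, []) (w.take k)).2).length) w.length (n+1)

open Classical in
/-- The DVCA `M` constructed from a DFA `A = (Q, Σ, δ)`, a subset `S ⊆ Q`, a number
`n > 0` and an arbitrary fixed state `r ∈ Q`, used in the reduction from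
`DFA-Sync-Into-Subset` to `n-Turn-Sync-DVCA-{Same, Arb}`.  Its states are
`Q ∪ {q_sync} ∪ {q_stall_i : 0 ≤ i ≤ n}` (`q_sync = Sum.inr (Sum.inl ())`,
`q_stall_i = Sum.inr (Sum.inr i)`), the internal letters are `Σ`, there is one call letter
`a` and one return letter `b`, and the stack (counter) alphabet is `{1, ⊥}`.  Internal
letters act as `δ` on `Q` and as the identity elsewhere; `b` loops on every state of `Q`;
`q_sync` is a sink (every letter loops on it, `a` incrementing and `b` decrementing the
counter).  The letter `a` maps `q ∈ S` to `q_stall_0` and loops on `q ∈ Q∖S`, always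
pushing `1`; for `i < n`, `a` loops on `q_stall_i` pushing `1`; for even `i < n`,
`b` maps `q_stall_i` on counter symbol `1` to `q_stall_{i+1}` and on `⊥` to `r`; for odd
`i < n`, `b` maps `q_stall_i` on `1` to `r` and on `⊥` to `q_stall_{i+1}`.  For even `n`,
`a` maps `q_stall_n` to `q_sync` (pushing `1`) and `b` maps `q_stall_n` to `r` on both `1`
and `⊥`; for odd `n`, `a` loops on `q_stall_n` (pushing `1`), and `b` maps `q_stall_n` on
`1` to `r` and on `⊥` to `q_sync`. -/
noncomputable def intoSubsetNTurnDVCA {Q A : Type} (δ : Q → A → Q) (S : Set Q)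
    (n : ℕ) (r : Q) :
    DVPDA (Q ⊕ Unit ⊕ Fin (n+1)) Unit A Unit Unit where
  δc := fun s _ => match s with
    | Sum.inl q =>
        (if q ∈ S then Sum.inr (Sum.inr ⟨0, n.succ_pos⟩) else Sum.inl q, ())
    | Sum.inr (Sum.inl _) => (Sum.inr (Sum.inl ()), ())
    | Sum.inr (Sum.inr i) =>
        (if (i : ℕ) < n then Sum.inr (Sum.inr i)
         else if Even n then Sum.inr (Sum.inl ()) else Sum.inr (Sum.inr i), ())
  δi := fun s σ => match s with
    | Sum.inl q => Sum.inl (δ q σ)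
    | Sum.inr t => Sum.inr t
  δr := fun s _ g => match s with
    | Sum.inl q => Sum.inl q
    | Sum.inr (Sum.inl _) => Sum.inr (Sum.inl ())
    | Sum.inr (Sum.inr i) =>
        if h : (i : ℕ) < n then
          (if Even (i : ℕ) then
             (match g with
              | some _ => Sum.inr (Sum.inr ⟨(i : ℕ) + 1, by omega⟩)
              | none => Sum.inl r)
           else
             (match g with
              | some _ => Sum.inl r
              | none => Sum.inr (Sum.inr ⟨(i : ℕ) + 1, by omega⟩)))
        else
          (if Even n then Sum.inl r
           else
             (match g with
              | some _ => Sum.inl r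
              | none => Sum.inr (Sum.inl ())))

/-!
The stack height of a run depends only on the word read, so over a one-letter stack alphabet the
same and the arbitrary stack model coincide, and the number of turns is a function of the word.
Since heights start at `0`, the parity of the number of turns made so far tells the current
direction: even means upwards, odd means downwards.

If `u` maps all of `Q` into `S`, then `b b u a (b b a)^m` followed by `b b` (for `n = 2 m + 1`) or
`b b a` (for `n = 2 m + 2`) synchronizes with exactly `n` turns: the first `b b` empties the
stalling states, and every block `b b a` costs two turns and raises the stalling index by two.

Conversely, let `u` consist of the internal letters before the first call letter, and suppose that
`u` maps `q` outside `S`. Then the first `a` is wasted on `q`: its run enters `q_stall_0` either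
at height at least two, so that the next `b` leads to `q_stall_1` with a nonempty stack, from where
one can only return to `r`, or after a complete up-and-down movement. Each further index costs one
turn, so `q_sync` is reached only after more than `n` turns.
-/

/-- The number of turns after the height moves from `a` to `b`, if there were `t` turns before.
The direction is encoded by parity: the current stroke is an upstroke iff `t` is even. -/
def turnUpdate (t a b : ℕ) : ℕ :=
  if (if Even t then b < a else a < b) then t + 1 else t

/-- The number of turns among `h 0, …, h k`, where the first stroke is taken to be an upstroke. -/
def turnCount (h : ℕ → ℕ) : ℕ → ℕ
  | 0 => 0
  | k + 1 => turnUpdate (turnCount h k) (h k) (h (k + 1))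

section turnCount

variable {h : ℕ → ℕ}

theorem turnCount_mono : Monotone (turnCount h) := by
  refine monotone_nat_of_le_succ fun k => ?_
  rw [turnCount, turnUpdate]
  split_ifs <;> omega

theorem le_succ_of_even_turnCount {k : ℕ} (heven : Even (turnCount h (k + 1))) :
    h k ≤ h (k + 1) := by
  rw [turnCount, turnUpdate] at heven
  grind

theorem succ_le_of_odd_turnCount {k : ℕ} (hodd : Odd (turnCount h (k + 1))) :
    h (k + 1) ≤ h k := by
  rw [turnCount, turnUpdate] at hodd
  grind

/-- An upstroke starts with a turn only if the count is odd, and makes no further turn. -/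
theorem turnCount_le_of_monotoneOn {a b : ℕ} (hab : a ≤ b) (hmono : MonotoneOn h (Set.Icc a b)) :
    turnCount h b ≤ turnCount h a + turnCount h a % 2 := by
  induction b, hab using Nat.le_induction with
  | base => omega
  | succ b hab ih =>
    have hstep : h b ≤ h (b + 1) := hmono ⟨hab, by omega⟩ ⟨by omega, le_rfl⟩ b.le_succ
    have hle := ih (hmono.mono (Set.Icc_subset_Icc_right b.le_succ))
    rw [turnCount, turnUpdate]
    grind

theorem turnCount_le_of_antitoneOn {a b : ℕ} (hab : a ≤ b) (hanti : AntitoneOn h (Set.Icc a b)) :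
    turnCount h b ≤ turnCount h a + (turnCount h a + 1) % 2 := by
  induction b, hab using Nat.le_induction with
  | base => omega
  | succ b hab ih =>
    have hstep : h (b + 1) ≤ h b := hanti ⟨hab, by omega⟩ ⟨by omega, le_rfl⟩ b.le_succ
    have hle := ih (hanti.mono (Set.Icc_subset_Icc_right b.le_succ))
    rw [turnCount, turnUpdate]
    grind

theorem atMostStrokes_iff_monotoneOn_or_antitoneOn {len m : ℕ} :
    AtMostStrokes h len m ↔
      ∃ br : Fin (m + 1) → ℕ, br 0 = 0 ∧ br (Fin.last m) = len ∧ Monotone br ∧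
        ∀ j : Fin m, MonotoneOn h (Set.Icc (br j.castSucc) (br j.succ)) ∨
          AntitoneOn h (Set.Icc (br j.castSucc) (br j.succ)) := by
  have monotoneOn_iff (a b : ℕ) : MonotoneOn h (Set.Icc a b) ↔
      ∀ x y, a ≤ x → x ≤ y → y ≤ b → h x ≤ h y :=
    ⟨fun hm x y hx hxy hy => hm ⟨hx, hxy.trans hy⟩ ⟨hx.trans hxy, hy⟩ hxy,
      fun hm x hx y hy hxy => hm x y hx.1 hxy hy.2⟩
  have antitoneOn_iff (a b : ℕ) : AntitoneOn h (Set.Icc a b) ↔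
      ∀ x y, a ≤ x → x ≤ y → y ≤ b → h y ≤ h x :=
    ⟨fun hm x y hx hxy hy => hm ⟨hx, hxy.trans hy⟩ ⟨hx.trans hxy, hy⟩ hxy,
      fun hm x hx y hy hxy => hm x y hx.1 hxy hy.2⟩
  simp only [AtMostStrokes, monotoneOn_iff, antitoneOn_iff]

theorem turnCount_le_of_atMostStrokes {len n : ℕ} (h0 : h 0 = 0)
    (hstrokes : AtMostStrokes h len (n + 1)) : turnCount h len ≤ n := by
  obtain ⟨br, hzero, hlast, hbr, hstroke⟩ :=
    atMostStrokes_iff_monotoneOn_or_antitoneOn.1 hstrokes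
  suffices hcount : ∀ j : Fin (n + 1), turnCount h (br j.succ) ≤ j by
    simpa [hlast] using hcount (Fin.last n)
  intro j
  have hle (i : Fin (n + 1)) : br i.castSucc ≤ br i.succ := hbr i.castSucc_le_succ
  induction j using Fin.induction with
  | zero =>
    have hfirst : MonotoneOn h (Set.Icc 0 (br (Fin.succ 0))) := by
      rcases hstroke 0 with hmono | hanti
      · simpa [hzero] using hmono
      · intro x hx y _ _
        have hx0 : h x ≤ h 0 := hanti ⟨by simp [hzero], by simp⟩ (by simpa [hzero] using hx) hx.1
        omega
    simpa [turnCount] using turnCount_le_of_monotoneOn (Nat.zero_le _) hfirst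
  | succ j ih =>
    have hstep : turnCount h (br j.succ.succ) ≤ turnCount h (br j.castSucc.succ) + 1 := by
      rcases hstroke j.succ with hmono | hanti
      · have := turnCount_le_of_monotoneOn (hle j.succ) hmono
        rw [Fin.succ_castSucc]
        omega
      · have := turnCount_le_of_antitoneOn (hle j.succ) hanti
        rw [Fin.succ_castSucc]
        omega
    simp only [Fin.val_castSucc, Fin.val_succ] at ih ⊢
    omega

theorem atMostStrokes_of_turnCount_le {len n : ℕ} (hcount : turnCount h len ≤ n) :
    AtMostStrokes h len (n + 1) := by
  -- The `j`-th breakpoint is the last time at which fewer than `j` turns have been made.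
  let br (j : ℕ) : ℕ := Nat.findGreatest (fun k => turnCount h k < j) len
  have turnCount_eq {j k : ℕ} (hk : br j ≤ k) (hk' : k + 1 ≤ br (j + 1)) :
      turnCount h (k + 1) = j := by
    have hlt : turnCount h (br (j + 1)) < j + 1 :=
      Nat.findGreatest_of_ne_zero (P := fun k => turnCount h k < j + 1) rfl (by omega)
    have hle : turnCount h (k + 1) ≤ turnCount h (br (j + 1)) := turnCount_mono hk'
    have hnlt : ¬ turnCount h (k + 1) < j :=
      Nat.findGreatest_is_greatest (P := fun k => turnCount h k < j) (Nat.lt_succ_of_le hk)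
        (hk'.trans (Nat.findGreatest_le len))
    omega
  refine atMostStrokes_iff_monotoneOn_or_antitoneOn.2
    ⟨fun j => br j, by simp [br, Nat.findGreatest_eq_zero_iff], ?_, ?_, fun j => ?_⟩
  · exact Nat.findGreatest_eq (Nat.lt_succ_of_le hcount)
  · exact fun i j hij => Nat.findGreatest_mono_left (fun k hk => hk.trans_le hij) len
  · rcases Nat.even_or_odd j with heven | hodd
    · refine .inl (monotoneOn_of_le_add_one Set.ordConnected_Icc fun k _ hk hk' => ?_)
      exact le_succ_of_even_turnCount (turnCount_eq hk.1 hk'.2 ▸ heven)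
    · refine .inr (antitoneOn_of_add_one_le Set.ordConnected_Icc fun k _ hk hk' => ?_)
      exact succ_le_of_odd_turnCount (turnCount_eq hk.1 hk'.2 ▸ hodd)

theorem atMostStrokes_succ_iff {len n : ℕ} (h0 : h 0 = 0) :
    AtMostStrokes h len (n + 1) ↔ turnCount h len ≤ n :=
  ⟨turnCount_le_of_atMostStrokes h0, atMostStrokes_of_turnCount_le⟩

end turnCount

namespace VLetter

variable {C I R : Type}

/-- The stack height after reading a letter at height `h`; the truncated subtraction reflects that
`⊥` is not popped. -/
def heightAfter (h : ℕ) : VLetter C I R → ℕ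
  | .call _ => h + 1
  | .int _ => h
  | .ret _ => h - 1

/-- The effect of a letter on the pair of the stack height and the number of turns so far. -/
def profileStep (p : ℕ × ℕ) (x : VLetter C I R) : ℕ × ℕ :=
  (x.heightAfter p.1, turnUpdate p.2 p.1 (x.heightAfter p.1))

/-- The stack height and the number of turns after reading `w` from the empty stack. -/
def profile (w : List (VLetter C I R)) : ℕ × ℕ :=
  w.foldl profileStep (0, 0)

theorem turnCount_profile (w : List (VLetter C I R)) (k : ℕ) :
    turnCount (fun i => (profile (w.take i)).1) k = (profile (w.take k)).2 := by
  induction k with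
  | zero => rfl
  | succ k ih =>
    rw [turnCount, ih]
    rcases lt_or_ge k w.length with hk | hk
    · simp only [profile, List.take_succ_eq_append_getElem hk, List.foldl_append,
        List.foldl_cons, List.foldl_nil, profileStep]
    · simp [List.take_of_length_le hk, List.take_of_length_le (hk.trans k.le_succ), turnUpdate]

theorem foldl_profileStep_map_int (u : List I) (p : ℕ × ℕ) :
    (u.map (.int : I → VLetter C I R)).foldl profileStep p = p := by
  induction u with
  | nil => rfl
  | cons a u ih => simpa [profileStep, heightAfter, turnUpdate] using ih

/-- The internal letters of a word that precede its first call letter. -/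
def intsBeforeCall : List (VLetter C I R) → List I
  | [] => []
  | .call _ :: _ => []
  | .int i :: w => i :: intsBeforeCall w
  | .ret _ :: w => intsBeforeCall w

end VLetter

namespace DVPDA

open VLetter

variable {Q C I R Γ : Type} (M : DVPDA Q C I R Γ)

theorem run_cons (cfg : Q × List Γ) (x : VLetter C I R) (w : List (VLetter C I R)) :
    M.run cfg (x :: w) = M.run (M.step cfg x) w :=
  rfl

theorem run_append (cfg : Q × List Γ) (v w : List (VLetter C I R)) :
    M.run cfg (v ++ w) = M.run (M.run cfg v) w :=
  List.foldl_append

theorem length_step (cfg : Q × List Γ) (x : VLetter C I R) :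
    (M.step cfg x).2.length = x.heightAfter cfg.2.length := by
  rcases cfg with ⟨q, _ | ⟨γ, υ⟩⟩ <;> cases x <;> rfl

theorem length_run (cfg : Q × List Γ) (t : ℕ) (w : List (VLetter C I R)) :
    (M.run cfg w).2.length = (w.foldl profileStep (cfg.2.length, t)).1 := by
  induction w generalizing cfg t with
  | nil => rfl
  | cons x w ih =>
    rw [run_cons, ih _ (turnUpdate t cfg.2.length (x.heightAfter cfg.2.length)), length_step]
    rfl

theorem nTurnRun_iff [Nonempty Q] {n : ℕ} {w : List (VLetter C I R)} :
    M.NTurnRun n w ↔ (profile w).2 ≤ n := by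
  have hheight (q : Q) : (fun k => (M.run (q, []) (w.take k)).2.length) =
      fun k => (profile (w.take k)).1 :=
    funext fun k => M.length_run (q, []) 0 (w.take k)
  have hprofile : (profile w).2 = turnCount (fun k => (profile (w.take k)).1) w.length := by
    rw [turnCount_profile, List.take_length]
  simp only [NTurnRun, hheight, forall_const, hprofile]
  exact atMostStrokes_succ_iff rfl

theorem syncSame_iff_syncArb [Subsingleton Γ] {w : List (VLetter C I R)} :
    M.SyncSame w ↔ M.SyncArb w := by
  refine ⟨fun ⟨qbar, υ, hrun⟩ => ⟨qbar, fun q => by rw [hrun]⟩, fun ⟨qbar, hrun⟩ => ?_⟩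
  refine ⟨qbar, (M.run (qbar, []) w).2, fun q => Prod.ext (hrun q) ?_⟩
  have hlength : (M.run (q, []) w).2.length = (M.run (qbar, []) w).2.length := by
    rw [M.length_run _ 0, M.length_run _ 0]
  exact List.ext_getElem hlength fun _ _ _ => Subsingleton.elim _ _

end DVPDA

namespace intoSubsetNTurnDVCA

open VLetter

variable {Q A : Type} {δ : Q → A → Q} {S : Set Q} {n : ℕ} {r : Q}

/-- The sink `q_sync`. -/
abbrev sync : Q ⊕ Unit ⊕ Fin (n + 1) := Sum.inr (Sum.inl ())

/-- The stalling state `q_stall_i`. -/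
abbrev stall (i : Fin (n + 1)) : Q ⊕ Unit ⊕ Fin (n + 1) := Sum.inr (Sum.inr i)

section transitions

theorem step_inl_call_of_mem {p : Q} (hp : p ∈ S) (υ : List Unit) :
    (intoSubsetNTurnDVCA δ S n r).step (Sum.inl p, υ) (.call ()) = (stall 0, () :: υ) := by
  simp [DVPDA.step, intoSubsetNTurnDVCA, hp]

theorem step_inl_call_of_notMem {p : Q} (hp : p ∉ S) (υ : List Unit) :
    (intoSubsetNTurnDVCA δ S n r).step (Sum.inl p, υ) (.call ()) = (Sum.inl p, () :: υ) := by
  simp [DVPDA.step, intoSubsetNTurnDVCA, hp]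

theorem step_inl_ret (p : Q) (υ : List Unit) :
    (intoSubsetNTurnDVCA δ S n r).step (Sum.inl p, υ) (.ret ()) = (Sum.inl p, υ.tail) := by
  cases υ <;> rfl

theorem step_sync (υ : List Unit) (x : VLetter Unit A Unit) :
    ((intoSubsetNTurnDVCA δ S n r).step (sync, υ) x).1 = sync := by
  cases x <;> cases υ <;> rfl

theorem step_stall_call_of_not_final {i : Fin (n + 1)} (hi : i.1 < n ∨ Odd i.1) (υ : List Unit) :
    (intoSubsetNTurnDVCA δ S n r).step (stall i, υ) (.call ()) = (stall i, () :: υ) := by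
  have hfinal : ¬ i.1 < n → ¬ Even n := by grind
  simp only [DVPDA.step, intoSubsetNTurnDVCA]
  split_ifs <;> simp_all

theorem step_stall_last_call (hn : Even n) (υ : List Unit) :
    (intoSubsetNTurnDVCA δ S n r).step (stall (Fin.last n), υ) (.call ()) = (sync, () :: υ) := by
  simp [DVPDA.step, intoSubsetNTurnDVCA, hn]

theorem step_stall_pop_of_even {i : ℕ} (hi : i < n) (heven : Even i) (υ : List Unit) :
    (intoSubsetNTurnDVCA δ S n r).step (stall ⟨i, by omega⟩, () :: υ) (.ret ()) =
      (stall ⟨i + 1, by omega⟩, υ) := by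
  simp [DVPDA.step, intoSubsetNTurnDVCA, hi, heven]

theorem step_stall_pop_of_odd_or_last {i : Fin (n + 1)} (hi : Odd i.1 ∨ i.1 = n) (υ : List Unit) :
    (intoSubsetNTurnDVCA δ S n r).step (stall i, () :: υ) (.ret ()) = (Sum.inl r, υ) := by
  have hodd : i.1 < n → ¬ Even i.1 := by grind
  simp only [DVPDA.step, intoSubsetNTurnDVCA]
  split_ifs <;> simp_all

theorem step_stall_bot_of_even {i : Fin (n + 1)} (heven : Even i.1) :
    (intoSubsetNTurnDVCA δ S n r).step (stall i, []) (.ret ()) = (Sum.inl r, []) := by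
  have hlast : ¬ i.1 < n → Even n := by grind
  simp only [DVPDA.step, intoSubsetNTurnDVCA]
  split_ifs <;> simp_all

theorem step_stall_bot_of_odd {i : ℕ} (hi : i < n) (hodd : Odd i) :
    (intoSubsetNTurnDVCA δ S n r).step (stall ⟨i, by omega⟩, []) (.ret ()) =
      (stall ⟨i + 1, by omega⟩, []) := by
  simp [DVPDA.step, intoSubsetNTurnDVCA, hi, hodd]

theorem step_stall_last_bot (hn : Odd n) :
    (intoSubsetNTurnDVCA δ S n r).step (stall (Fin.last n), []) (.ret ()) = (sync, []) := by
  simp [DVPDA.step, intoSubsetNTurnDVCA, hn]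

theorem run_inl_map_int (u : List A) (p : Q) (υ : List Unit) :
    (intoSubsetNTurnDVCA δ S n r).run (Sum.inl p, υ) (u.map .int) =
      (Sum.inl (u.foldl δ p), υ) := by
  induction u generalizing p with
  | nil => rfl
  | cons a _ ih => exact ih (δ p a)

theorem run_sync (υ : List Unit) (w : List (VLetter Unit A Unit)) :
    ((intoSubsetNTurnDVCA δ S n r).run (sync, υ) w).1 = sync := by
  induction w generalizing υ with
  | nil => rfl
  | cons x w ih =>
    rw [DVPDA.run_cons, ← Prod.mk.eta (p := DVPDA.step _ _ _), step_sync]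
    exact ih _

end transitions

section synchronizingWord

/-- The word `b b u a (b b a)^m`, which leads every state to `q_stall_{2m}` or to `q_sync` if `u`
maps all of `Q` into `S` and `2 m < n`. -/
def climbWord (u : List A) (m : ℕ) : List (VLetter Unit A Unit) :=
  [.ret (), .ret ()] ++ u.map .int ++ [.call ()] ++
    (List.replicate m [.ret (), .ret (), .call ()]).flatten

theorem climbWord_zero (u : List A) :
    climbWord u 0 = [.ret (), .ret ()] ++ u.map .int ++ [.call ()] := by
  simp [climbWord]

theorem climbWord_succ (u : List A) (m : ℕ) :
    climbWord u (m + 1) = climbWord u m ++ [.ret (), .ret (), .call ()] := by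
  simp [climbWord, List.replicate_succ']

theorem profile_climbWord (u : List A) (m : ℕ) : profile (climbWord u m) = (1, 2 * m) := by
  induction m with
  | zero =>
    simp [climbWord_zero, profile, foldl_profileStep_map_int, profileStep, heightAfter, turnUpdate]
  | succ m ih =>
    rw [profile] at ih
    simp [climbWord_succ, profile, ih, profileStep, heightAfter, turnUpdate, mul_add]

theorem run_ret_ret (s : Q ⊕ Unit ⊕ Fin (n + 1)) :
    (∃ p, (intoSubsetNTurnDVCA δ S n r).run (s, []) [.ret (), .ret ()] = (Sum.inl p, [])) ∨
      (intoSubsetNTurnDVCA δ S n r).run (s, []) [.ret (), .ret ()] = (sync, []) := by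
  rcases s with p | ⟨⟩ | ⟨i, hi⟩
  · exact .inl ⟨p, rfl⟩
  · exact .inr rfl
  · simp only [DVPDA.run, List.foldl_cons, List.foldl_nil]
    rcases Nat.even_or_odd i with heven | hodd
    · exact .inl ⟨r, by rw [step_stall_bot_of_even heven, step_inl_ret, List.tail_nil]⟩
    · rcases Nat.lt_succ_iff_lt_or_eq.1 hi with hlt | rfl
      · exact .inl ⟨r, by rw [step_stall_bot_of_odd hlt hodd, step_stall_bot_of_even hodd.add_one]⟩
      · refine .inr ?_
        rw [← Fin.last, step_stall_last_bot hodd]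
        rfl

theorem run_climbWord {u : List A} (hu : ∀ q, u.foldl δ q ∈ S) (s : Q ⊕ Unit ⊕ Fin (n + 1))
    {m : ℕ} (hm : 2 * m < n) :
    (intoSubsetNTurnDVCA δ S n r).run (s, []) (climbWord u m) = (stall ⟨2 * m, by omega⟩, [()]) ∨
      ((intoSubsetNTurnDVCA δ S n r).run (s, []) (climbWord u m)).1 = sync := by
  induction m with
  | zero =>
    rw [climbWord_zero, DVPDA.run_append, DVPDA.run_append]
    rcases run_ret_ret (δ := δ) (S := S) (r := r) s with ⟨p, hp⟩ | hsync
    · left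
      rw [hp, run_inl_map_int]
      exact step_inl_call_of_mem (hu p) []
    · right
      rw [hsync, ← DVPDA.run_append, run_sync]
  | succ m ih =>
    rw [climbWord_succ, DVPDA.run_append]
    rcases ih (by omega) with hstall | hsync
    · left
      rw [hstall, DVPDA.run_cons, DVPDA.run_cons, step_stall_pop_of_even (by omega) (by simp),
        step_stall_bot_of_odd (by omega) (by simp)]
      exact step_stall_call_of_not_final (.inl hm) []
    · right
      rw [← Prod.mk.eta (p := DVPDA.run _ _ (climbWord u m)), hsync, run_sync]

theorem exists_syncArb_profile_snd_eq (hn : 0 < n) {u : List A} (hu : ∀ q, u.foldl δ q ∈ S) :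
    ∃ w, (intoSubsetNTurnDVCA δ S n r).SyncArb w ∧ (profile w).2 = n := by
  obtain ⟨m, hnm⟩ : ∃ m, n = 2 * m + 1 ∨ n = 2 * m + 2 := ⟨(n - 1) / 2, by omega⟩
  have syncArb_append {v : List (VLetter Unit A Unit)}
      (hv : ((intoSubsetNTurnDVCA δ S n r).run (stall ⟨2 * m, by omega⟩, [()]) v).1 = sync) :
      (intoSubsetNTurnDVCA δ S n r).SyncArb (climbWord u m ++ v) := by
    refine ⟨sync, fun s => ?_⟩
    rw [DVPDA.run_append]
    rcases run_climbWord hu s (by omega : 2 * m < n) with hstall | hsync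
    · rw [hstall, hv]
    · rw [← Prod.mk.eta (p := DVPDA.run _ _ (climbWord u m)), hsync, run_sync]
  have profile_append (v : List (VLetter Unit A Unit)) :
      profile (climbWord u m ++ v) = v.foldl profileStep (1, 2 * m) := by
    rw [← profile_climbWord u m, profile, List.foldl_append, profile]
  rcases hnm with rfl | rfl
  · refine ⟨climbWord u m ++ [.ret (), .ret ()], syncArb_append ?_, ?_⟩
    · rw [DVPDA.run_cons, step_stall_pop_of_even (by omega) (by simp)]
      exact congrArg Prod.fst (step_stall_last_bot (by simp))
    · simp [profile_append, profileStep, heightAfter, turnUpdate]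
  · refine ⟨climbWord u m ++ [.ret (), .ret (), .call ()], syncArb_append ?_, ?_⟩
    · rw [DVPDA.run_cons, DVPDA.run_cons, step_stall_pop_of_even (by omega) (by simp),
        step_stall_bot_of_odd (by omega) (by simp)]
      exact congrArg Prod.fst (step_stall_last_call (by simp [Nat.even_add]) [])
    · simp [profile_append, profileStep, heightAfter, turnUpdate]

end synchronizingWord

section late

/-- The invariant of a run on which the first call letter was read outside `S`: its state lags
behind the stack height `p.1` and the number of turns `p.2`. A run that reads its first call letter
in `S` can be in `q_stall_i` after `i` turns, or after `i - 1` turns if `0 < i` is even and the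
stack is empty. A late run needs two more turns for this, except where its stack is too high to
advance: with `2 ≤ p.1` in `q_stall_0`, and with `0 < p.1` in an odd stalling state. -/
def Late (p : ℕ × ℕ) : Q ⊕ Unit ⊕ Fin (n + 1) → Prop
  | Sum.inl _ => 0 < p.1 ∨ 0 < p.2
  | Sum.inr (Sum.inl _) => n < p.2
  | Sum.inr (Sum.inr i) =>
      if Even i.1 then i.1 = 0 ∧ 2 ≤ p.1 ∨ p.1 = 0 ∧ i.1 + 1 ≤ p.2 ∨ i.1 + 2 ≤ p.2
      else 0 < p.1 ∧ i.1 ≤ p.2 ∨ i.1 + 2 ≤ p.2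

theorem Late.step_inl {q : Q} {υ : List Unit} {t : ℕ}
    (hlate : Late (n := n) (υ.length, t) (Sum.inl q)) (x : VLetter Unit A Unit) :
    Late (profileStep (υ.length, t) x)
      ((intoSubsetNTurnDVCA δ S n r).step (Sum.inl q, υ) x).1 := by
  simp only [Late] at hlate
  rcases x with ⟨⟩ | a | ⟨⟩
  · by_cases hq : q ∈ S
    · rw [step_inl_call_of_mem hq]
      simp only [Late, profileStep, heightAfter, turnUpdate]
      grind
    · rw [step_inl_call_of_notMem hq]
      simp [Late, profileStep, heightAfter]
  · simpa [DVPDA.step, intoSubsetNTurnDVCA, Late, profileStep, heightAfter, turnUpdate] using hlate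
  · rw [step_inl_ret]
    simp only [Late, profileStep, heightAfter, turnUpdate]
    grind

theorem Late.step_stall_call (hn : 0 < n) {i : Fin (n + 1)} {υ : List Unit} {t : ℕ}
    (hlate : Late (Q := Q) (υ.length, t) (stall i)) :
    Late (profileStep (υ.length, t) (.call () : VLetter Unit A Unit))
      ((intoSubsetNTurnDVCA δ S n r).step (stall i, υ) (.call ())).1 := by
  simp only [Late] at hlate
  by_cases hi : i.1 < n ∨ Odd i.1
  · rw [step_stall_call_of_not_final hi]
    simp only [Late, profileStep, heightAfter, turnUpdate]
    grind
  · obtain rfl : i = Fin.last n := by grind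
    rw [step_stall_last_call (by grind)]
    simp only [Late, profileStep, heightAfter, turnUpdate]
    grind

theorem Late.step_stall_ret {i : Fin (n + 1)} {υ : List Unit} {t : ℕ}
    (hlate : Late (Q := Q) (υ.length, t) (stall i)) :
    Late (profileStep (υ.length, t) (.ret () : VLetter Unit A Unit))
      ((intoSubsetNTurnDVCA δ S n r).step (stall i, υ) (.ret ())).1 := by
  obtain ⟨i, hi⟩ := i
  simp only [Late] at hlate
  rcases υ with _ | ⟨⟨⟩, υ⟩
  · rcases Nat.even_or_odd i with heven | hodd
    · rw [step_stall_bot_of_even heven]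
      simp only [Late, profileStep, heightAfter, turnUpdate]
      grind
    · rcases Nat.lt_succ_iff_lt_or_eq.1 hi with hlt | rfl
      · rw [step_stall_bot_of_odd hlt hodd]
        simp only [Late, profileStep, heightAfter, turnUpdate]
        grind
      · rw [← Fin.last, step_stall_last_bot hodd]
        simp only [Late, profileStep, heightAfter, turnUpdate]
        grind
  · by_cases hr : Odd i ∨ i = n
    · rw [step_stall_pop_of_odd_or_last hr]
      simp only [Late, profileStep, heightAfter, turnUpdate]
      grind
    · rw [step_stall_pop_of_even (by omega) (by grind)]
      simp only [Late, profileStep, heightAfter, turnUpdate]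
      grind

theorem Late.step (hn : 0 < n) {s : Q ⊕ Unit ⊕ Fin (n + 1)} {υ : List Unit} {t : ℕ}
    (hlate : Late (υ.length, t) s) (x : VLetter Unit A Unit) :
    Late (profileStep (υ.length, t) x) ((intoSubsetNTurnDVCA δ S n r).step (s, υ) x).1 := by
  rcases s with q | ⟨⟩ | i
  · exact hlate.step_inl x
  · rw [step_sync]
    simp only [Late, profileStep, turnUpdate] at hlate ⊢
    grind
  · rcases x with ⟨⟩ | a | ⟨⟩
    · exact hlate.step_stall_call hn
    · simpa [DVPDA.step, intoSubsetNTurnDVCA, profileStep, heightAfter, turnUpdate] using hlate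
    · exact hlate.step_stall_ret

theorem Late.run (hn : 0 < n) {cfg : (Q ⊕ Unit ⊕ Fin (n + 1)) × List Unit} {t : ℕ}
    (hlate : Late (cfg.2.length, t) cfg.1) (w : List (VLetter Unit A Unit)) :
    Late (w.foldl profileStep (cfg.2.length, t)) ((intoSubsetNTurnDVCA δ S n r).run cfg w).1 := by
  induction w generalizing cfg t with
  | nil => exact hlate
  | cons x w ih =>
    rw [DVPDA.run_cons, List.foldl_cons]
    have hstep := hlate.step (δ := δ) (S := S) (r := r) hn x
    rw [profileStep, ← DVPDA.length_step (intoSubsetNTurnDVCA δ S n r) cfg x] at hstep ⊢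
    exact ih hstep

theorem lt_profile_snd_of_intsBeforeCall_notMem (hn : 0 < n) {w : List (VLetter Unit A Unit)}
    {q : Q} (hq : (intsBeforeCall w).foldl δ q ∉ S)
    (hsync : ((intoSubsetNTurnDVCA δ S n r).run (Sum.inl q, []) w).1 = sync) :
    n < (profile w).2 := by
  induction w generalizing q with
  | nil => cases hsync
  | cons x w ih =>
    rcases x with ⟨⟩ | a | ⟨⟩
    · have hlate : Late (n := n) (([()] : List Unit).length, 0) (Sum.inl q : Q ⊕ _) :=
        .inl Nat.one_pos
      have hrun := Late.run (δ := δ) (S := S) (r := r) (cfg := (Sum.inl q, [()])) hn hlate w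
      rw [DVPDA.run_cons, step_inl_call_of_notMem (p := q) hq] at hsync
      rw [hsync] at hrun
      exact hrun
    · exact ih hq hsync
    · exact ih hq hsync

end late

end intoSubsetNTurnDVCA

open VLetter intoSubsetNTurnDVCA in
theorem intoSubsetNTurnDVCA_sync_iff_general
    {Q A : Type} (δ : Q → A → Q) (S : Set Q)
    (n : ℕ) (hn : 0 < n) (r : Q) :
    ((∃ w : List (VLetter Unit A Unit),
        (intoSubsetNTurnDVCA δ S n r).SyncSame w ∧
        (intoSubsetNTurnDVCA δ S n r).NTurnRun n w) ↔
      (∃ w : List (VLetter Unit A Unit),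
        (intoSubsetNTurnDVCA δ S n r).SyncArb w ∧
        (intoSubsetNTurnDVCA δ S n r).NTurnRun n w)) ∧
    ((∃ w : List (VLetter Unit A Unit),
        (intoSubsetNTurnDVCA δ S n r).SyncArb w ∧
        (intoSubsetNTurnDVCA δ S n r).NTurnRun n w) ↔
      (∃ w : List A, ∀ q : Q, w.foldl δ q ∈ S)) := by
  simp only [DVPDA.syncSame_iff_syncArb, DVPDA.nTurnRun_iff, true_and]
  constructor
  · rintro ⟨w, ⟨qbar, hrun⟩, hturns⟩
    obtain rfl : sync = qbar := by rw [← hrun sync, run_sync]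
    refine ⟨intsBeforeCall w, fun q => by_contra fun hq => hturns.not_gt ?_⟩
    exact lt_profile_snd_of_intsBeforeCall_notMem hn hq (hrun (Sum.inl q))
  · rintro ⟨u, hu⟩
    obtain ⟨w, hsync, hturns⟩ := exists_syncArb_profile_snd_eq hn hu
    exact ⟨w, hsync, hturns.le⟩

/-- Let `A = (Q, Σ, δ)` be a DFA, `S ⊆ Q`, `n > 0`, and let `M` be the
DVCA constructed from `A`, `S`, `n` (and an arbitrary fixed state `r ∈ Q`).  Then the
following are equivalent: (i) `M` has an `n`-turn synchronizing word in the same stack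
model; (ii) `M` has an `n`-turn synchronizing word in the arbitrary stack model; (iii)
there is a word `w ∈ Σ*` with `δ(Q, w) ⊆ S`. -/
theorem intoSubsetNTurnDVCA_sync_iff
    {Q A : Type} [Fintype Q] (δ : Q → A → Q) (S : Set Q)
    (n : ℕ) (hn : 0 < n) (r : Q) :
    ((∃ w : List (VLetter Unit A Unit),
        (intoSubsetNTurnDVCA δ S n r).SyncSame w ∧
        (intoSubsetNTurnDVCA δ S n r).NTurnRun n w) ↔
      (∃ w : List (VLetter Unit A Unit),
        (intoSubsetNTurnDVCA δ S n r).SyncArb w ∧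
        (intoSubsetNTurnDVCA δ S n r).NTurnRun n w)) ∧
    ((∃ w : List (VLetter Unit A Unit),
        (intoSubsetNTurnDVCA δ S n r).SyncArb w ∧
        (intoSubsetNTurnDVCA δ S n r).NTurnRun n w) ↔
      (∃ w : List A, ∀ q : Q, w.foldl δ q ∈ S)) :=
  intoSubsetNTurnDVCA_sync_iff_general δ S n hn r
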